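/- Let Σ be an alphabet with at least two symbols and fix b ∈ Σ. For any constants h₁, h₂ ≥ 1 and any M ≥ 1, there exist regular languages L₁, L₂ over Σ such that tc_b(Lᵢ) = hᵢ (i = 1, 2) and tc_b(L₁ ∪ L₂) ≥ M. -/

import Mathlib

/-- An incomplete DFA over alphabet `α` with state type `σ`:
the transition function is a partial function, modelled as `Option`-valued. -/
structure IDFA (α : Type) (σ : Type) where
  /-- The (partial) transition function. -/
  step : σ → α → Option σ
  /-- The start state. -/
  start : σ
  /-- The set of accepting states. -/
  accept : Set σ

namespace IDFA

variable {α σ : Type}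

/-- The extended (partial) transition function on words. -/
def evalFrom (A : IDFA α σ) (q : σ) (w : List α) : Option σ :=
  w.foldl (fun oq a => oq.bind fun p => A.step p a) (some q)

/-- Running the automaton from the start state. -/
def eval (A : IDFA α σ) (w : List α) : Option σ :=
  A.evalFrom A.start w

/-- The language recognized by an incomplete DFA: words on which the run is
defined and ends in an accepting state. -/
def accepts (A : IDFA α σ) : Set (List α) :=
  {w | ∃ q ∈ A.accept, A.eval w = some q}

/-- `#tr(A)`: the number of (defined) transitions of `A`. -/
noncomputable def trCount (A : IDFA α σ) : ℕ :=
  {p : σ × α | (A.step p.1 p.2).isSome}.ncard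

/-- `#tr(A, b)`: the number of `b`-transitions of `A`. -/
noncomputable def trCountOn (A : IDFA α σ) (b : α) : ℕ :=
  {q : σ | (A.step q b).isSome}.ncard

/-- An incomplete DFA is connected if every state is reachable from the start state. -/
def Connected (A : IDFA α σ) : Prop :=
  ∀ q : σ, ∃ w : List α, A.evalFrom A.start w = some q

end IDFA

/-- A language is regular iff it is recognized by some incomplete DFA with
finitely many states. -/
def IsRegularLang {α : Type} (L : Set (List α)) : Prop :=
  ∃ (σ : Type) (_ : Finite σ) (A : IDFA α σ), A.accepts = L

/-- `tc(L)`: the transition complexity of `L`, i.e. the minimal number of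
transitions of any incomplete DFA recognizing `L`. -/
noncomputable def tc {α : Type} (L : Set (List α)) : ℕ :=
  sInf {n | ∃ (σ : Type) (_ : Finite σ) (A : IDFA α σ), A.accepts = L ∧ A.trCount = n}

/-- `tc_b(L)`: the `b`-transition complexity of `L`, i.e. the minimal number of
`b`-transitions of any incomplete DFA recognizing `L`. -/
noncomputable def tcOn {α : Type} (L : Set (List α)) (b : α) : ℕ :=
  sInf {n | ∃ (σ : Type) (_ : Finite σ) (A : IDFA α σ), A.accepts = L ∧ A.trCountOn b = n}

/-- `sc(L)`: the (incomplete-DFA) state complexity of `L`, i.e. the number of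
states of a minimal incomplete DFA recognizing `L`. -/
noncomputable def sc {α : Type} (L : Set (List α)) : ℕ :=
  sInf {n | ∃ (σ : Type) (_ : Finite σ) (A : IDFA α σ), A.accepts = L ∧ Nat.card σ = n}

/-!
Words whose residuals are pairwise distinct and all admit a continuation starting with `b` lead any
incomplete DFA to distinct states with an outgoing `b`-transition, which bounds `tc_b` from below.

For `h₁ ≠ 0`, let `L₁` consist of the words `v b^h₁` with `b ∉ v`, and `L₂` of the words `v` and
`v b^h₂` with `b ∉ v` and `n ∣ |v|`. An automaton for `L₂` must count modulo `n`, but it needs a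
`b`-transition only at residue `0`, so `tc_b(L₂) = h₂` does not see `n`. In the union, `L₁` forces
a `b`-transition at every residue, while `L₂` keeps the `n` residues apart.
-/

namespace IDFA

variable {α σ : Type}

theorem evalFrom_append_singleton (A : IDFA α σ) (q : σ) (w : List α) (x : α) :
    A.evalFrom q (w ++ [x]) = (A.evalFrom q w).bind fun p => A.step p x := by
  simp only [evalFrom, List.foldl_append, List.foldl_cons, List.foldl_nil]

theorem evalFrom_append (A : IDFA α σ) (q : σ) (v w : List α) :
    A.evalFrom q (v ++ w) = (A.evalFrom q v).bind fun p => A.evalFrom p w := by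
  induction w using List.reverseRecOn with
  | nil => simp [evalFrom]
  | append_singleton w x ih =>
    simp only [← List.append_assoc, evalFrom_append_singleton, ih, Option.bind_assoc]

theorem eval_append_singleton (A : IDFA α σ) (w : List α) (x : α) :
    A.eval (w ++ [x]) = (A.eval w).bind fun p => A.step p x :=
  A.evalFrom_append_singleton A.start w x

theorem eval_append (A : IDFA α σ) (v w : List α) :
    A.eval (v ++ w) = (A.eval v).bind fun p => A.evalFrom p w :=
  A.evalFrom_append A.start v w

theorem exists_eval_eq_of_append_cons_mem_accepts {A : IDFA α σ} {w u : List α} {b : α}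
    (h : w ++ b :: u ∈ A.accepts) : ∃ q, A.eval w = some q ∧ (A.step q b).isSome := by
  obtain ⟨_, -, heval⟩ := h
  rw [List.append_cons, eval_append, eval_append_singleton] at heval
  obtain ⟨_, hwb, -⟩ := Option.bind_eq_some_iff.1 heval
  obtain ⟨q, hw, hstep⟩ := Option.bind_eq_some_iff.1 hwb
  exact ⟨q, hw, Option.isSome_of_mem hstep⟩

theorem append_mem_accepts_iff_of_eval_eq {A : IDFA α σ} {w w' : List α}
    (h : A.eval w = A.eval w') (v : List α) : w ++ v ∈ A.accepts ↔ w' ++ v ∈ A.accepts := by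
  simp only [accepts, Set.mem_ofPred_eq, eval_append, h]

theorem card_le_trCountOn {ι : Type*} [Finite σ] (A : IDFA α σ) {b : α} {w : ι → List α}
    (hb : ∀ i, ∃ u, w i ++ b :: u ∈ A.accepts)
    (hw : Function.Injective fun i => {v | w i ++ v ∈ A.accepts}) :
    Nat.card ι ≤ A.trCountOn b := by
  choose u hu using hb
  choose q hq hstep using fun i => exists_eval_eq_of_append_cons_mem_accepts (hu i)
  have hq_inj : Function.Injective fun i => (⟨q i, hstep i⟩ : {p | (A.step p b).isSome}) := by
    intro i j hij
    have hqij : q i = q j := congrArg Subtype.val hij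
    have heval : A.eval (w i) = A.eval (w j) := by rw [hq, hq, hqij]
    exact hw (Set.ext (append_mem_accepts_iff_of_eval_eq heval))
  exact Nat.card_le_card_of_injective _ hq_inj

/-- The completion of an incomplete DFA to a Mathlib `DFA`, with `none` as the sink state. -/
def toDFA (A : IDFA α σ) : DFA α (Option σ) where
  step p x := p.bind fun q => A.step q x
  start := some A.start
  accept := some '' A.accept

theorem accepts_toDFA (A : IDFA α σ) : A.toDFA.accepts = A.accepts := by
  ext w
  change (∃ q, q ∈ A.accept ∧ some q = A.eval w) ↔ ∃ q, q ∈ A.accept ∧ A.eval w = some q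
  simp only [eq_comm]

/-- A Mathlib `DFA` viewed as an incomplete DFA all of whose transitions happen to be defined. -/
def ofDFA (D : DFA α σ) : IDFA α σ where
  step q x := some (D.step q x)
  start := D.start
  accept := D.accept

theorem eval_ofDFA (D : DFA α σ) (w : List α) : (ofDFA D).eval w = some (D.eval w) := by
  induction w using List.reverseRecOn with
  | nil => rfl
  | append_singleton w x ih =>
    rw [eval_append_singleton, ih, DFA.eval_append_singleton, Option.bind_some, ofDFA]

theorem accepts_ofDFA (D : DFA α σ) : (ofDFA D).accepts = D.accepts := by
  ext w
  simp only [accepts, eval_ofDFA, Set.mem_ofPred_eq, Option.some_inj, exists_eq_right']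
  rfl

end IDFA

section Regular

variable {α : Type} {L L₁ L₂ : Set (List α)}

theorem isRegularLang_iff_isRegular : IsRegularLang L ↔ Language.IsRegular L := by
  constructor
  · rintro ⟨σ, _, A, rfl⟩
    exact ⟨Option σ, Fintype.ofFinite _, A.toDFA, A.accepts_toDFA⟩
  · rintro ⟨σ, _, D, rfl⟩
    exact ⟨σ, inferInstance, IDFA.ofDFA D, IDFA.accepts_ofDFA D⟩

theorem IsRegularLang.union (h₁ : IsRegularLang L₁) (h₂ : IsRegularLang L₂) :
    IsRegularLang (L₁ ∪ L₂) :=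
  isRegularLang_iff_isRegular.2 <|
    (isRegularLang_iff_isRegular.1 h₁).add (isRegularLang_iff_isRegular.1 h₂)

theorem IsRegularLang.card_le_tcOn {ι : Type*} (hL : IsRegularLang L) {b : α} {w : ι → List α}
    (hb : ∀ i, ∃ u, w i ++ b :: u ∈ L) (hw : Function.Injective fun i => {v | w i ++ v ∈ L}) :
    Nat.card ι ≤ tcOn L b := by
  obtain ⟨σ, hσ, A, hA⟩ := hL
  refine le_csInf ⟨A.trCountOn b, σ, hσ, A, hA, rfl⟩ ?_
  rintro _ ⟨τ, _, B, rfl, rfl⟩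
  exact B.card_le_trCountOn hb hw

theorem tcOn_accepts_le {σ : Type} [Finite σ] (A : IDFA α σ) (b : α) :
    tcOn A.accepts b ≤ A.trCountOn b :=
  Nat.sInf_le ⟨σ, inferInstance, A, rfl, rfl⟩

end Regular

/-- The words `v b^k` where `b` does not occur in `v`, the length of `v` is divisible by `n`, and
`k ∈ S`. Both languages witnessing the theorem are of this form. -/
def freePowLang {α : Type} (b : α) (n : ℕ) (S : Set ℕ) : Set (List α) :=
  {w | ∃ v k, b ∉ v ∧ n ∣ v.length ∧ k ∈ S ∧ w = v ++ List.replicate k b}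

/-- The automaton recognizing `freePowLang b n S` when `h` bounds `S`. State `(r, k)` records the
length `r` modulo `n` of the `b`-free prefix and the number `k` of trailing `b`s. -/
def freePowAutomaton {α : Type} [DecidableEq α] (b : α) (n h : ℕ) (S : Set ℕ) :
    IDFA α (ZMod n × Fin (h + 1)) where
  step p x :=
    if x = b then
      if p.1 = 0 ∧ p.2 < Fin.last h then some (0, p.2 + 1) else none
    else if p.2 = 0 then some (p.1 + 1, 0) else none
  start := (0, 0)
  accept := {p | p.1 = 0 ∧ (p.2 : ℕ) ∈ S}

section FreePowLang

variable {α : Type} {b : α} {n h : ℕ} {S T : Set ℕ}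

theorem append_replicate_inj_of_notMem {v v' : List α} (hv : b ∉ v) (hv' : b ∉ v') {k k' : ℕ} :
    v ++ List.replicate k b = v' ++ List.replicate k' b ↔ v = v' ∧ k = k' := by
  classical
  refine ⟨fun heq => ?_, fun ⟨hv, hk⟩ => by rw [hv, hk]⟩
  obtain rfl : k = k' := by
    simpa [List.count_eq_zero_of_not_mem, hv, hv'] using congrArg (List.count b) heq
  exact ⟨List.append_cancel_right heq, rfl⟩

theorem append_replicate_mem_freePowLang {v : List α} (hv : b ∉ v) {k : ℕ} :
    v ++ List.replicate k b ∈ freePowLang b n S ↔ n ∣ v.length ∧ k ∈ S := by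
  refine ⟨?_, fun ⟨hn, hk⟩ => ⟨v, k, hv, hn, hk, rfl⟩⟩
  rintro ⟨v', k', hv', hn, hk, heq⟩
  obtain ⟨rfl, rfl⟩ := (append_replicate_inj_of_notMem hv hv').1 heq
  exact ⟨hn, hk⟩

theorem replicate_mem_freePowLang {k : ℕ} :
    List.replicate k b ∈ freePowLang b n S ↔ k ∈ S := by
  simpa using append_replicate_mem_freePowLang (n := n) (S := S) (k := k) List.not_mem_nil

theorem mem_freePowLang_of_notMem {v : List α} (hv : b ∉ v) :
    v ∈ freePowLang b n S ↔ n ∣ v.length ∧ 0 ∈ S := by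
  simpa using append_replicate_mem_freePowLang (n := n) (S := S) (k := 0) hv

theorem step_freePowAutomaton_eq_some_iff [DecidableEq α] {p q : ZMod n × Fin (h + 1)} {x : α} :
    (freePowAutomaton b n h S).step p x = some q ↔
      (x = b ∧ p.1 = 0 ∧ q.1 = 0 ∧ (q.2 : ℕ) = p.2 + 1) ∨
        (x ≠ b ∧ p.2 = 0 ∧ q.2 = 0 ∧ q.1 = p.1 + 1) := by
  obtain ⟨r, k⟩ := p
  obtain ⟨s, l⟩ := q
  have hsucc : k < Fin.last h ∧ k + 1 = l ↔ (l : ℕ) = k + 1 := by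
    constructor
    · rintro ⟨hk, rfl⟩
      exact Fin.val_add_one_of_lt hk
    · intro hl
      have hk : k < Fin.last h := Fin.lt_def.2 (by rw [Fin.val_last]; omega)
      exact ⟨hk, Fin.ext ((Fin.val_add_one_of_lt hk).trans hl.symm)⟩
  by_cases hx : x = b
  · simp only [freePowAutomaton, hx, if_true, Option.ite_none_right_eq_some, Option.some_inj,
      Prod.mk.injEq, ← hsucc]
    tauto
  · simp only [freePowAutomaton, hx, if_false, Option.ite_none_right_eq_some, Option.some_inj,
      Prod.mk.injEq, eq_comm (b := s), eq_comm (b := l)]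
    tauto

theorem exists_of_eval_freePowAutomaton_eq_some [DecidableEq α] {w : List α}
    {q : ZMod n × Fin (h + 1)} (hw : (freePowAutomaton b n h S).eval w = some q) :
    ∃ v, b ∉ v ∧ (v.length : ZMod n) = q.1 ∧ w = v ++ List.replicate q.2 b := by
  induction w using List.reverseRecOn generalizing q with
  | nil =>
    obtain rfl : (0, 0) = q := Option.some_inj.1 hw
    exact ⟨[], by simp⟩
  | append_singleton w x ih =>
    rw [IDFA.eval_append_singleton] at hw
    obtain ⟨p, hp, hstep⟩ := Option.bind_eq_some_iff.1 hw
    obtain ⟨v, hv, hlen, rfl⟩ := ih hp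
    rcases step_freePowAutomaton_eq_some_iff.1 hstep with
      ⟨rfl, hp₁, hq₁, hq₂⟩ | ⟨hx, hp₂, hq₂, hq₁⟩
    · exact ⟨v, hv, by rw [hlen, hp₁, hq₁], by
        rw [hq₂, List.replicate_succ', List.append_assoc]⟩
    · exact ⟨v ++ [x], by simp [hv, hx.symm], by simp [hlen, hq₁], by simp [hp₂, hq₂]⟩

theorem eval_freePowAutomaton_of_notMem [DecidableEq α] {v : List α} (hv : b ∉ v) :
    (freePowAutomaton b n h S).eval v = some ((v.length : ZMod n), 0) := by
  induction v using List.reverseRecOn with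
  | nil => simp [IDFA.eval, IDFA.evalFrom, freePowAutomaton]
  | append_singleton v x ih =>
    obtain ⟨hv, hx⟩ : b ∉ v ∧ b ≠ x := by simpa using hv
    rw [IDFA.eval_append_singleton, ih hv, Option.bind_some, step_freePowAutomaton_eq_some_iff]
    exact Or.inr ⟨hx.symm, rfl, rfl, by simp⟩

theorem eval_freePowAutomaton_append_replicate [DecidableEq α] {v : List α} (hv : b ∉ v)
    (hn : n ∣ v.length) {k : ℕ} (hk : k < h + 1) :
    (freePowAutomaton b n h S).eval (v ++ List.replicate k b) = some (0, ⟨k, hk⟩) := by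
  induction k with
  | zero =>
    rw [List.replicate_zero, List.append_nil, eval_freePowAutomaton_of_notMem hv,
      (ZMod.natCast_eq_zero_iff _ _).2 hn]
    rfl
  | succ k ih =>
    rw [List.replicate_succ', ← List.append_assoc, IDFA.eval_append_singleton,
      ih (Nat.lt_of_succ_lt hk), Option.bind_some, step_freePowAutomaton_eq_some_iff]
    exact Or.inl ⟨rfl, rfl, rfl, rfl⟩

theorem accepts_freePowAutomaton [DecidableEq α] (hS : h ∈ upperBounds S) :
    (freePowAutomaton b n h S).accepts = freePowLang b n S := by
  ext w
  constructor
  · rintro ⟨⟨r, k⟩, ⟨rfl, hk⟩, heval⟩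
    obtain ⟨v, hv, hlen, rfl⟩ := exists_of_eval_freePowAutomaton_eq_some heval
    exact ⟨v, k, hv, (ZMod.natCast_eq_zero_iff _ _).1 hlen, hk, rfl⟩
  · rintro ⟨v, k, hv, hn, hk, rfl⟩
    exact ⟨_, ⟨rfl, hk⟩,
      eval_freePowAutomaton_append_replicate hv hn (Nat.lt_succ_of_le (hS hk))⟩

theorem trCountOn_freePowAutomaton [DecidableEq α] :
    (freePowAutomaton b n h S).trCountOn b = h := by
  have hstep : {q | ((freePowAutomaton b n h S).step q b).isSome} =
      ({0} : Set (ZMod n)) ×ˢ Set.Iio (Fin.last h) := by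
    ext q
    simp [freePowAutomaton, Option.isSome_iff_exists]
  rw [IDFA.trCountOn, hstep, Set.ncard_prod, Set.ncard_singleton, one_mul,
    Set.ncard_eq_toFinset_card', Set.toFinset_Iio, Fin.card_Iio, Fin.val_last]

theorem isRegularLang_freePowLang [NeZero n] (hS : BddAbove S) :
    IsRegularLang (freePowLang b n S) := by
  classical
  obtain ⟨h, hh⟩ := hS
  exact ⟨_, inferInstance, freePowAutomaton b n h S, accepts_freePowAutomaton hh⟩

theorem tcOn_freePowLang_le [NeZero n] (hS : h ∈ upperBounds S) :
    tcOn (freePowLang b n S) b ≤ h := by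
  classical
  calc tcOn (freePowLang b n S) b
      = tcOn (freePowAutomaton b n h S).accepts b := by rw [accepts_freePowAutomaton hS]
    _ ≤ (freePowAutomaton b n h S).trCountOn b := tcOn_accepts_le _ b
    _ = h := trCountOn_freePowAutomaton

theorem le_tcOn_freePowLang [NeZero n] (hS : IsGreatest S h) :
    h ≤ tcOn (freePowLang b n S) b := by
  refine (Nat.card_fin h).ge.trans <| (isRegularLang_freePowLang hS.bddAbove).card_le_tcOn
    (w := fun i => List.replicate i b) (fun i => ⟨List.replicate (h - i - 1) b, ?_⟩) ?_
  · rw [← List.replicate_succ, ← List.replicate_add, replicate_mem_freePowLang]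
    convert hS.1
    omega
  · refine Function.Injective.of_lt_imp_ne fun i j hij heq => ?_
    have hmem := Set.ext_iff.1 heq (List.replicate (h - i) b)
    simp only [Set.mem_ofPred_eq, ← List.replicate_add, replicate_mem_freePowLang] at hmem
    have hle : (j : ℕ) + (h - i) ≤ h := hS.2 (hmem.1 (by convert hS.1; omega))
    omega

theorem tcOn_freePowLang [NeZero n] (hS : IsGreatest S h) : tcOn (freePowLang b n S) b = h :=
  (tcOn_freePowLang_le hS.2).antisymm (le_tcOn_freePowLang hS)

theorem le_tcOn_freePowLang_union [Nontrivial α] [NeZero n] (hS : BddAbove S) (hT : BddAbove T)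
    (hS_ne : S.Nonempty) (hS0 : 0 ∉ S) (hT0 : 0 ∈ T) :
    n ≤ tcOn (freePowLang b 1 S ∪ freePowLang b n T) b := by
  obtain ⟨a, hab⟩ := exists_ne b
  have hfree (i : ℕ) : b ∉ List.replicate i a := fun hb => hab (List.eq_of_mem_replicate hb).symm
  have hL : IsRegularLang (freePowLang b 1 S ∪ freePowLang b n T) :=
    (isRegularLang_freePowLang hS).union (isRegularLang_freePowLang hT)
  refine (Nat.card_fin n).ge.trans <|
    hL.card_le_tcOn (w := fun i => List.replicate i a) (fun i => ?_) ?_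
  · obtain ⟨k, hk⟩ := hS_ne
    obtain ⟨m, rfl⟩ := Nat.exists_eq_succ_of_ne_zero (ne_of_mem_of_not_mem hk hS0)
    refine ⟨List.replicate m b, Or.inl ?_⟩
    rw [← List.replicate_succ, append_replicate_mem_freePowLang (hfree i)]
    exact ⟨one_dvd _, hk⟩
  · refine Function.Injective.of_lt_imp_ne fun i j hij heq => ?_
    have hmem := Set.ext_iff.1 heq (List.replicate (n - j) a)
    simp only [Set.mem_ofPred_eq, ← List.replicate_add, Set.mem_union,
      mem_freePowLang_of_notMem (hfree _), List.length_replicate, hS0, hT0, and_false, and_true,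
      false_or] at hmem
    have hdvd : n ∣ i + (n - j) := hmem.2 (by rw [Nat.add_sub_cancel' j.2.le])
    have hle := Nat.le_of_dvd (by omega) hdvd
    omega

end FreePowLang

theorem exists_tcOn_eq_and_le_tcOn_union {α : Type} [Nontrivial α] (b : α) {h₁ : ℕ}
    (hh₁ : h₁ ≠ 0) (h₂ M : ℕ) :
    ∃ L₁ L₂ : Set (List α), IsRegularLang L₁ ∧ IsRegularLang L₂ ∧
      tcOn L₁ b = h₁ ∧ tcOn L₂ b = h₂ ∧ M ≤ tcOn (L₁ ∪ L₂) b := by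
  have hS : IsGreatest {h₁} h₁ := isGreatest_singleton
  have hT : IsGreatest {0, h₂} h₂ := by
    simpa using isGreatest_pair (a := 0) (b := h₂)
  refine ⟨freePowLang b 1 {h₁}, freePowLang b (M + 1) {0, h₂},
    isRegularLang_freePowLang hS.bddAbove, isRegularLang_freePowLang hT.bddAbove,
    tcOn_freePowLang hS, tcOn_freePowLang hT, M.le_succ.trans ?_⟩
  exact le_tcOn_freePowLang_union hS.bddAbove hT.bddAbove (Set.singleton_nonempty h₁)
    (by simpa using hh₁.symm) (by simp)

theorem tcOn_union_unbounded_general {α : Type} [Nontrivial α] (b : α) {h₁ h₂ : ℕ}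
    (h : h₁ ≠ 0 ∨ h₂ ≠ 0) (M : ℕ) :
    ∃ L₁ L₂ : Set (List α), IsRegularLang L₁ ∧ IsRegularLang L₂ ∧
      tcOn L₁ b = h₁ ∧ tcOn L₂ b = h₂ ∧ M ≤ tcOn (L₁ ∪ L₂) b := by
  rcases h with hh₁ | hh₂
  · exact exists_tcOn_eq_and_le_tcOn_union b hh₁ h₂ M
  · obtain ⟨L₂, L₁, hL₂, hL₁, htc₂, htc₁, hM⟩ := exists_tcOn_eq_and_le_tcOn_union b hh₂ h₁ M
    exact ⟨L₁, L₂, hL₁, hL₂, htc₁, htc₂, Set.union_comm L₂ L₁ ▸ hM⟩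

/-- the `b`-transition complexity of a union can be arbitrarily
large compared with the `b`-transition complexities of the arguments. -/
theorem tcOn_union_unbounded {α : Type} [Finite α] (hcard : 2 ≤ Nat.card α) (b : α)
    (h₁ h₂ M : ℕ) (hh₁ : 1 ≤ h₁) (hh₂ : 1 ≤ h₂) (hM : 1 ≤ M) :
    ∃ L₁ L₂ : Set (List α), IsRegularLang L₁ ∧ IsRegularLang L₂ ∧
      tcOn L₁ b = h₁ ∧ tcOn L₂ b = h₂ ∧ M ≤ tcOn (L₁ ∪ L₂) b := by
  have : Nontrivial α := Finite.one_lt_card_iff_nontrivial.1 hcard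
  exact tcOn_union_unbounded_general b (Or.inl (Nat.one_le_iff_ne_zero.1 hh₁)) M
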